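/- Let Ω ⊆ ℝ^d be an unbounded open set with Σ(Ω) < ∞ and let k ≥ 1. Then the function p ↦ T_{k,p}(Ω) is non-increasing and continuous on [1,∞), satisfies Σ(Ω) ≤ T_{k,p}(Ω) ≤ k^{1/p}·Σ(Ω) for every 1 ≤ p < ∞, and T_{k,p}(Ω) → Σ(Ω) = T_{k,∞}(Ω) as p → ∞. -/

import Mathlib

/-!
Put `n = k - 1`. For an `n`-partition `ω` let `N_p(ω)` (`thrVal`) be the `ℓ^p` norm of the vector
`(Σ, λ(ω₁), …, λ(ωₙ)) ∈ ℝ^k`. Since `x ↦ (x^p + Σ^p)^(1/p)` is continuous and monotone on `[0,∞)`,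
it commutes with infima, so `T_{k,p} = inf_ω N_p(ω)` (`ThreshT_isGLB`).

The norm inequalities `‖b‖_q ≤ ‖b‖_p ≤ k^(1/p - 1/q) ‖b‖_q` for `p ≤ q` therefore pass to the
threshold: `T_{k,q} ≤ T_{k,p} ≤ k^(1/p - 1/q) T_{k,q}`. This is the monotonicity, and it gives
`k^(-|1/p - 1/q|) T_{k,q} ≤ T_{k,p} ≤ k^(|1/p - 1/q|) T_{k,q}` for all `p, q ≥ 1`, hence
continuity.

The lower bound `Σ ≤ T_{k,p}` is clear. For the upper bound one needs `n`-partitions with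
`λ(ωᵢ) ≤ Σ + ε` (`exists_partition`). These are built inside disjoint annuli: as
`λ(Ω \ closedBall 0 R) ≤ Σ`, there is a test function supported in `Ω` outside `closedBall 0 R` with
Rayleigh quotient below `Σ + ε`, its support lies in a larger ball `ball 0 r`, and one continues
from `r`. The limit `p → ∞` follows from the two bounds.
-/

open MeasureTheory Metric Set Filter
open scoped ENNReal Topology

noncomputable section

/-- Euclidean space `ℝ^d`. -/
abbrev Euc (d : ℕ) : Type := EuclideanSpace ℝ (Fin d)

/-- The Rayleigh quotient `R_V(u)` of the Schrödinger operator `-Δ + V`. -/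
def RayleighQ (d : ℕ) (V : Euc d → ℝ) (u : Euc d → ℝ) : ℝ :=
  (∫ x, (‖gradient u x‖ ^ 2 + V x * u x ^ 2)) / (∫ x, u x ^ 2)

/-- `λ(ω)`: bottom of the spectrum of `-Δ + V` with Dirichlet conditions on `ω`,
via the variational characterization over smooth compactly supported test functions
supported in `ω`. -/
def lambdaLow (d : ℕ) (V : Euc d → ℝ) (ω : Set (Euc d)) : ℝ :=
  sInf { r : ℝ | ∃ u : Euc d → ℝ, ContDiff ℝ (⊤ : ℕ∞) u ∧ HasCompactSupport u ∧ u ≠ 0 ∧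
    tsupport u ⊆ ω ∧ r = RayleighQ d V u }

/-- The set `{ λ(ω \ K) : K ⊆ ℝ^d compact }` appearing in Persson's characterization
of the bottom of the essential spectrum. -/
def specSet (d : ℕ) (V : Euc d → ℝ) (ω : Set (Euc d)) : Set ℝ :=
  { r : ℝ | ∃ K : Set (Euc d), IsCompact K ∧ r = lambdaLow d V (ω \ K) }

/-- `Σ(ω) := sup { λ(ω \ K) : K compact } ∈ [0,∞]`, as an extended real number. -/
def SigmaE (d : ℕ) (V : Euc d → ℝ) (ω : Set (Euc d)) : ℝ≥0∞ :=
  ⨆ K : { K : Set (Euc d) // IsCompact K }, ENNReal.ofReal (lambdaLow d V (ω \ K.1))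

/-- `Σ(ω)` as a real number (meaningful when `specSet` is bounded above,
i.e. when `Σ(ω) < ∞`). -/
def SigmaR (d : ℕ) (V : Euc d → ℝ) (ω : Set (Euc d)) : ℝ :=
  sSup (specSet d V ω)

/-- Open annulus `A_{r,R}(0) = { x : r < |x| < R }`. -/
def annulusO (d : ℕ) (r R : ℝ) : Set (Euc d) := { x : Euc d | r < ‖x‖ ∧ ‖x‖ < R }

/-- A `k`-partition of `Ω`: a `k`-tuple of pairwise disjoint nonempty open subsets of `Ω`. -/
def IsPartition (d : ℕ) (Ω : Set (Euc d)) {k : ℕ} (ω : Fin k → Set (Euc d)) : Prop :=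
  (∀ i, IsOpen (ω i)) ∧ (∀ i, (ω i).Nonempty) ∧ (∀ i, ω i ⊆ Ω) ∧
    ∀ i j, i ≠ j → Disjoint (ω i) (ω j)

/-- `Λ_{k,p}(Ω) := inf (∑ i λ(ωᵢ)^p)^(1/p)` over all `k`-partitions of `Ω`, `1 ≤ p < ∞`. -/
def LamP (d : ℕ) (V : Euc d → ℝ) (Ω : Set (Euc d)) (k : ℕ) (p : ℝ) : ℝ :=
  sInf { r : ℝ | ∃ ω : Fin k → Set (Euc d), IsPartition d Ω ω ∧
    r = (∑ i, lambdaLow d V (ω i) ^ p) ^ (1 / p) }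

/-- `Λ_{k,∞}(Ω) := inf max_i λ(ωᵢ)` over all `k`-partitions of `Ω`. -/
def LamInf (d : ℕ) (V : Euc d → ℝ) (Ω : Set (Euc d)) (k : ℕ) : ℝ :=
  sInf { r : ℝ | ∃ ω : Fin k → Set (Euc d), IsPartition d Ω ω ∧
    r = ⨆ i, lambdaLow d V (ω i) }

/-- Threshold value `T_{k,p}(Ω) := (Λ_{k-1,p}(Ω)^p + Σ(Ω)^p)^(1/p)` for `1 ≤ p < ∞`. -/
def ThreshT (d : ℕ) (V : Euc d → ℝ) (Ω : Set (Euc d)) (k : ℕ) (p : ℝ) : ℝ :=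
  (LamP d V Ω (k - 1) p ^ p + SigmaR d V Ω ^ p) ^ (1 / p)

/-! ### Comparison of `ℓ^p` norms -/

lemma lp_antitone {ι : Type*} [Fintype ι] (b : ι → ℝ) (hb : ∀ i, 0 ≤ b i) {p q : ℝ}
    (hp : 0 < p) (hpq : p ≤ q) :
    (∑ i, b i ^ q) ^ (1 / q) ≤ (∑ i, b i ^ p) ^ (1 / p) := by
  have hq : 0 < q := hp.trans_le hpq
  have hS : 0 ≤ ∑ i, b i ^ p := Finset.sum_nonneg fun i _ => Real.rpow_nonneg (hb i) p
  set M := (∑ i, b i ^ p) ^ (1 / p) with hM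
  have hM0 : 0 ≤ M := Real.rpow_nonneg hS _
  have hMp : M ^ p = ∑ i, b i ^ p := by
    rw [hM, one_div, Real.rpow_inv_rpow hS hp.ne']
  have hle : ∀ i, b i ≤ M := fun i => by
    rw [← Real.rpow_le_rpow_iff (hb i) hM0 hp, hMp]
    exact Finset.single_le_sum (f := fun i => b i ^ p)
      (fun j _ => Real.rpow_nonneg (hb j) p) (Finset.mem_univ i)
  rw [one_div, Real.rpow_inv_le_iff_of_pos
    (Finset.sum_nonneg fun i _ => Real.rpow_nonneg (hb i) q) hM0 hq]
  have hsplit : ∀ x : ℝ, 0 ≤ x → x ^ q = x ^ p * x ^ (q - p) := fun x hx => by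
    rw [← Real.rpow_add_of_nonneg hx hp.le (sub_nonneg.2 hpq)]; congr 1; ring
  calc ∑ i, b i ^ q ≤ ∑ i, b i ^ p * M ^ (q - p) := by
        refine Finset.sum_le_sum fun i _ => ?_
        rw [hsplit _ (hb i)]
        exact mul_le_mul_of_nonneg_left
          (Real.rpow_le_rpow (hb i) (hle i) (sub_nonneg.2 hpq)) (Real.rpow_nonneg (hb i) p)
    _ = M ^ q := by rw [← Finset.sum_mul, ← hMp, ← hsplit M hM0]

lemma lp_le_card_mul {n : ℕ} (b : Fin n → ℝ) (hb : ∀ i, 0 ≤ b i) {p q : ℝ}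
    (hp : 0 < p) (hpq : p ≤ q) :
    (∑ i, b i ^ p) ^ (1 / p) ≤ (n : ℝ) ^ (1 / p - 1 / q) * (∑ i, b i ^ q) ^ (1 / q) := by
  have hq : 0 < q := hp.trans_le hpq
  have hS : 0 ≤ ∑ i, b i ^ p := Finset.sum_nonneg fun i _ => Real.rpow_nonneg (hb i) p
  have hSq : 0 ≤ ∑ i, b i ^ q := Finset.sum_nonneg fun i _ => Real.rpow_nonneg (hb i) q
  have h := Real.rpow_sum_le_const_mul_sum_rpow_of_nonneg (s := Finset.univ)
    (f := fun i => b i ^ p) (p := q / p) ((one_le_div hp).2 hpq)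
    (fun i _ => Real.rpow_nonneg (hb i) p)
  have h2 : ∀ i, (b i ^ p) ^ (q / p) = b i ^ q := fun i => by
    rw [← Real.rpow_mul (hb i)]; congr 1; field_simp
  simp only [h2, Finset.card_univ, Fintype.card_fin] at h
  have h3 := Real.rpow_le_rpow (Real.rpow_nonneg hS _) h (one_div_pos.2 hq).le
  rw [← Real.rpow_mul hS, Real.mul_rpow (by positivity) hSq, ← Real.rpow_mul (by positivity)] at h3
  convert h3 using 2
  · field_simp
  · congr 1; field_simp

/-! ### The Rayleigh quotient and partitions with small spectral bottoms -/

lemma RayleighQ_nonneg {d : ℕ} {V : Euc d → ℝ} (hV : ∀ x, 0 ≤ V x) (u : Euc d → ℝ) :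
    0 ≤ RayleighQ d V u := by
  refine div_nonneg (integral_nonneg fun x => ?_) (integral_nonneg fun x => sq_nonneg _)
  have := mul_nonneg (hV x) (sq_nonneg (u x))
  simp only [Pi.zero_apply]
  positivity

lemma lambdaLow_nonneg {d : ℕ} {V : Euc d → ℝ} (hV : ∀ x, 0 ≤ V x) (ω : Set (Euc d)) :
    0 ≤ lambdaLow d V ω := by
  refine Real.sInf_nonneg ?_
  rintro r ⟨u, -, -, -, -, rfl⟩
  exact RayleighQ_nonneg hV u

lemma lambdaLow_le {d : ℕ} {V : Euc d → ℝ} (hV : ∀ x, 0 ≤ V x) {ω : Set (Euc d)}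
    {u : Euc d → ℝ} (h1 : ContDiff ℝ (⊤ : ℕ∞) u) (h2 : HasCompactSupport u) (h3 : u ≠ 0)
    (h4 : tsupport u ⊆ ω) : lambdaLow d V ω ≤ RayleighQ d V u := by
  refine csInf_le ⟨0, ?_⟩ ⟨u, h1, h2, h3, h4, rfl⟩
  rintro r ⟨u, -, -, -, -, rfl⟩
  exact RayleighQ_nonneg hV u

/-- Near-minimizers for `λ(ω)` exist: a nonempty open set carries a bump function, so the infimum
defining `lambdaLow` is not over the empty set. -/
lemma exists_test {d : ℕ} {V : Euc d → ℝ} {ω : Set (Euc d)} (ho : IsOpen ω) (hne : ω.Nonempty)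
    {c : ℝ} (hc : lambdaLow d V ω < c) :
    ∃ u : Euc d → ℝ, ContDiff ℝ (⊤ : ℕ∞) u ∧ HasCompactSupport u ∧ u ≠ 0 ∧
      tsupport u ⊆ ω ∧ RayleighQ d V u < c := by
  have hS : { r : ℝ | ∃ u : Euc d → ℝ, ContDiff ℝ (⊤ : ℕ∞) u ∧ HasCompactSupport u ∧ u ≠ 0 ∧
      tsupport u ⊆ ω ∧ r = RayleighQ d V u }.Nonempty := by
    obtain ⟨x, hx⟩ := hne
    obtain ⟨f, hf1, hf2, hf3, -, hf4⟩ :=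
      exists_contDiff_tsupport_subset (n := (⊤ : ℕ∞)) (ho.mem_nhds hx)
    refine ⟨_, f, hf3, hf2, fun h => ?_, hf1, rfl⟩
    simp [h] at hf4
  obtain ⟨r, ⟨u, h1, h2, h3, h4, rfl⟩, hr⟩ := exists_lt_of_csInf_lt hS hc
  exact ⟨u, h1, h2, h3, h4, hr⟩

lemma SigmaR_nonneg {d : ℕ} {V : Euc d → ℝ} (hV : ∀ x, 0 ≤ V x) (Ω : Set (Euc d)) :
    0 ≤ SigmaR d V Ω := by
  refine Real.sSup_nonneg ?_
  rintro r ⟨K, -, rfl⟩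
  exact lambdaLow_nonneg hV _

/-- The induction carries a radius `R` with all `ωᵢ ⊆ ball 0 R`, so that the next set can be
chosen in an annulus outside `closedBall 0 R`. -/
lemma exists_partition {d : ℕ} {V : Euc d → ℝ} (hV : ∀ x, 0 ≤ V x) {Ω : Set (Euc d)}
    (hΩ : IsOpen Ω) (hunb : ¬ Bornology.IsBounded Ω) (hbdd : BddAbove (specSet d V Ω))
    {c : ℝ} (hc : SigmaR d V Ω < c) (n : ℕ) :
    ∃ (R : ℝ) (ω : Fin n → Set (Euc d)), IsPartition d Ω ω ∧ (∀ i, ω i ⊆ ball 0 R) ∧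
      ∀ i, lambdaLow d V (ω i) ≤ c := by
  induction n with
  | zero => exact ⟨0, fun _ => ∅, ⟨fun i => i.elim0, fun i => i.elim0, fun i => i.elim0,
      fun i => i.elim0⟩, fun i => i.elim0, fun i => i.elim0⟩
  | succ n ih =>
    obtain ⟨R, ω, ⟨ho, hne, hsub, hdis⟩, hR, hl⟩ := ih
    have hopen : IsOpen (Ω \ closedBall (0 : Euc d) R) := hΩ.sdiff isClosed_closedBall
    have hnon : (Ω \ closedBall (0 : Euc d) R).Nonempty := by
      by_contra h
      rw [not_nonempty_iff_eq_empty, sdiff_eq_empty] at h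
      exact hunb (isBounded_closedBall.subset h)
    have hlt : lambdaLow d V (Ω \ closedBall 0 R) < c :=
      (le_csSup hbdd ⟨_, isCompact_closedBall 0 R, rfl⟩).trans_lt hc
    obtain ⟨u, h1, h2, h3, h4, h5⟩ := exists_test hopen hnon hlt
    obtain ⟨R', hR'⟩ := h2.isCompact.isBounded.subset_ball (0 : Euc d)
    have h6 : tsupport u ⊆ (Ω \ closedBall 0 R) ∩ ball 0 R' := subset_inter h4 hR'
    have hd0 : ∀ i, Disjoint ((Ω \ closedBall (0 : Euc d) R) ∩ ball 0 R') (ω i) := fun i =>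
      Set.disjoint_left.2 fun x hx hx' => hx.1.2 (ball_subset_closedBall (hR i hx'))
    refine ⟨max R R', Fin.cons ((Ω \ closedBall 0 R) ∩ ball 0 R') ω, ⟨?_, ?_, ?_, ?_⟩, ?_, ?_⟩
    · exact Fin.cases (hopen.inter isOpen_ball) ho
    · refine Fin.cases ?_ hne
      obtain ⟨x, hx⟩ := Function.ne_iff.1 h3
      exact ⟨x, h6 (subset_tsupport u hx)⟩
    · exact Fin.cases (fun x hx => hx.1.1) hsub
    · intro i j
      refine Fin.cases ?_ (fun i => ?_) i <;> refine Fin.cases ?_ (fun j => ?_) j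
      · exact fun h => (h rfl).elim
      · exact fun _ => hd0 j
      · exact fun _ => (hd0 i).symm
      · exact fun h => hdis i j fun e => h (by rw [e])
    · exact Fin.cases (inter_subset_right.trans (ball_subset_ball (le_max_right _ _)))
        fun i => (hR i).trans (ball_subset_ball (le_max_left _ _))
    · exact Fin.cases ((lambdaLow_le hV h1 h2 h3 h6).trans h5.le) hl

/-! ### The threshold as an infimum of `ℓ^p` norms -/

/-- The vector `(Σ(Ω), λ(ω₁), …, λ(ωₙ))`. -/
def thrVec (d : ℕ) (V : Euc d → ℝ) (Ω : Set (Euc d)) {n : ℕ} (ω : Fin n → Set (Euc d)) :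
    Fin (n + 1) → ℝ :=
  Fin.cons (SigmaR d V Ω) fun i => lambdaLow d V (ω i)

/-- The `ℓ^p` norm of `(Σ(Ω), λ(ω₁), …, λ(ωₙ))`. -/
def thrVal (d : ℕ) (V : Euc d → ℝ) (Ω : Set (Euc d)) {n : ℕ} (ω : Fin n → Set (Euc d))
    (p : ℝ) : ℝ :=
  (∑ i, thrVec d V Ω ω i ^ p) ^ (1 / p)

lemma thrVec_nonneg {d : ℕ} {V : Euc d → ℝ} (hV : ∀ x, 0 ≤ V x) (Ω : Set (Euc d)) {n : ℕ}
    (ω : Fin n → Set (Euc d)) (i : Fin (n + 1)) : 0 ≤ thrVec d V Ω ω i :=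
  Fin.cases (motive := fun i => 0 ≤ thrVec d V Ω ω i) (SigmaR_nonneg hV Ω)
    (fun i => lambdaLow_nonneg hV (ω i)) i

lemma ThreshT_isGLB {d : ℕ} {V : Euc d → ℝ} (hV : ∀ x, 0 ≤ V x) {Ω : Set (Euc d)}
    (n : ℕ) (hne : ∃ ω : Fin n → Set (Euc d), IsPartition d Ω ω) {p : ℝ} (hp : 1 ≤ p) :
    IsGLB { r : ℝ | ∃ ω : Fin n → Set (Euc d), IsPartition d Ω ω ∧ r = thrVal d V Ω ω p }
      (ThreshT d V Ω (n + 1) p) := by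
  have hp0 : 0 < p := by linarith
  have hS0 := SigmaR_nonneg hV Ω
  set S := { r : ℝ | ∃ ω : Fin n → Set (Euc d), IsPartition d Ω ω ∧
    r = (∑ i, lambdaLow d V (ω i) ^ p) ^ (1 / p) } with hS
  have hsum : ∀ ω : Fin n → Set (Euc d), 0 ≤ ∑ i, lambdaLow d V (ω i) ^ p := fun ω =>
    Finset.sum_nonneg fun i _ => Real.rpow_nonneg (lambdaLow_nonneg hV _) p
  have hSnn : ∀ r ∈ S, 0 ≤ r := by
    rintro r ⟨ω, -, rfl⟩
    exact Real.rpow_nonneg (hsum ω) _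
  have hSne : S.Nonempty := by
    obtain ⟨ω, h⟩ := hne
    exact ⟨_, ω, h, rfl⟩
  have hbd : BddBelow S := ⟨0, hSnn⟩
  set f : ℝ → ℝ := fun x => (x ^ p + SigmaR d V Ω ^ p) ^ (1 / p) with hf
  have hmono : MonotoneOn f S := by
    intro x hx y hy hxy
    have hx0 := hSnn x hx
    have := Real.rpow_le_rpow hx0 hxy hp0.le
    refine Real.rpow_le_rpow ?_ (by linarith) (by positivity)
    positivity
  have hcont : Continuous f :=
    ((Real.continuous_rpow_const hp0.le).add continuous_const).rpow_const
      fun _ => Or.inr (by positivity)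
  have hset : { r : ℝ | ∃ ω : Fin n → Set (Euc d), IsPartition d Ω ω ∧
      r = thrVal d V Ω ω p } = f '' S := by
    have key : ∀ ω : Fin n → Set (Euc d),
        thrVal d V Ω ω p = f ((∑ i, lambdaLow d V (ω i) ^ p) ^ (1 / p)) := fun ω => by
      simp only [hf, thrVal, thrVec, Fin.sum_univ_succ, Fin.cons_zero, Fin.cons_succ]
      rw [one_div, Real.rpow_inv_rpow (hsum ω) hp0.ne', add_comm]
    ext r
    constructor
    · rintro ⟨ω, h, rfl⟩
      exact ⟨_, ⟨ω, h, rfl⟩, (key ω).symm⟩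
    · rintro ⟨_, ⟨ω, h, rfl⟩, rfl⟩
      exact ⟨ω, h, (key ω).symm⟩
  have hT : ThreshT d V Ω (n + 1) p = sInf (f '' S) :=
    MonotoneOn.map_csInf_of_continuousWithinAt hcont.continuousWithinAt hmono hSne hbd
  rw [hset, hT]
  refine isGLB_csInf (hSne.image f) ⟨0, ?_⟩
  rintro _ ⟨x, hx, rfl⟩
  have := hSnn x hx
  simp only [hf]
  positivity

/-- behavior in `p` of the threshold `T_{k,p}(Ω)`: non-increasing and
continuous on `[1,∞)`, sandwiched between `Σ(Ω)` and `k^(1/p)·Σ(Ω)`, and tending to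
`Σ(Ω) = T_{k,∞}(Ω)` as `p → ∞`. -/
theorem statement_9 (d : ℕ) (hd : 2 ≤ d) (V : Euc d → ℝ)
    (hVmeas : Measurable V)
    (hVloc : ∀ K : Set (Euc d), IsCompact K → ∃ C : ℝ, ∀ x ∈ K, V x ≤ C)
    (hVpos : ∀ x, 0 ≤ V x)
    (Ω : Set (Euc d)) (hΩ : IsOpen Ω) (hunb : ¬ Bornology.IsBounded Ω)
    (hbdd : BddAbove (specSet d V Ω))
    (k : ℕ) (hk : 1 ≤ k) :
    AntitoneOn (fun p : ℝ => ThreshT d V Ω k p) (Ici 1) ∧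
    ContinuousOn (fun p : ℝ => ThreshT d V Ω k p) (Ici 1) ∧
    (∀ p : ℝ, 1 ≤ p →
        SigmaR d V Ω ≤ ThreshT d V Ω k p ∧
        ThreshT d V Ω k p ≤ (k : ℝ) ^ (1 / p) * SigmaR d V Ω) ∧
    Tendsto (fun p : ℝ => ThreshT d V Ω k p) atTop (𝓝 (SigmaR d V Ω)) := by
  obtain ⟨n, rfl⟩ : ∃ n, k = n + 1 := ⟨k - 1, by omega⟩
  set T : ℝ → ℝ := fun p => ThreshT d V Ω (n + 1) p with hTdef
  set σ := SigmaR d V Ω with hσ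
  have hσ0 : 0 ≤ σ := SigmaR_nonneg hVpos Ω
  have hk0 : (0 : ℝ) < ((n + 1 : ℕ) : ℝ) := by positivity
  have hk1 : (1 : ℝ) ≤ ((n + 1 : ℕ) : ℝ) := by exact_mod_cast hk
  have hpart : ∃ ω : Fin n → Set (Euc d), IsPartition d Ω ω := by
    obtain ⟨-, ω, h, -⟩ := exists_partition hVpos hΩ hunb hbdd (lt_add_one (SigmaR d V Ω)) n
    exact ⟨ω, h⟩
  have hglb := fun {p : ℝ} (hp : 1 ≤ p) => ThreshT_isGLB (V := V) hVpos n hpart hp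
  have hanti : ∀ p q : ℝ, 1 ≤ p → p ≤ q → T q ≤ T p := by
    intro p q hp hpq
    refine (hglb hp).2 ?_
    rintro _ ⟨ω, h, rfl⟩
    exact ((hglb (hp.trans hpq)).1 ⟨ω, h, rfl⟩).trans
      (lp_antitone _ (thrVec_nonneg hVpos Ω ω) (by linarith) hpq)
  have hcomp : ∀ p q : ℝ, 1 ≤ p → p ≤ q →
      T p ≤ ((n + 1 : ℕ) : ℝ) ^ (1 / p - 1 / q) * T q := by
    intro p q hp hpq
    have hc : 0 < ((n + 1 : ℕ) : ℝ) ^ (1 / p - 1 / q) := Real.rpow_pos_of_pos hk0 _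
    rw [← div_le_iff₀' hc]
    refine (hglb (hp.trans hpq)).2 ?_
    rintro _ ⟨ω, h, rfl⟩
    rw [div_le_iff₀' hc]
    exact ((hglb hp).1 ⟨ω, h, rfl⟩).trans
      (lp_le_card_mul _ (thrVec_nonneg hVpos Ω ω) (by linarith) hpq)
  have hlow : ∀ p : ℝ, 1 ≤ p → σ ≤ T p := by
    intro p hp
    have hp0 : 0 < p := by linarith
    refine (hglb hp).2 ?_
    rintro _ ⟨ω, h, rfl⟩
    have h1 : σ ^ p ≤ ∑ i, thrVec d V Ω ω i ^ p :=
      Finset.single_le_sum (f := fun i => thrVec d V Ω ω i ^ p)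
        (fun j _ => Real.rpow_nonneg (thrVec_nonneg hVpos Ω ω j) p) (Finset.mem_univ 0)
    have h2 := Real.rpow_le_rpow (Real.rpow_nonneg hσ0 p) h1 (one_div_pos.2 hp0).le
    rwa [one_div, Real.rpow_rpow_inv hσ0 hp0.ne', ← one_div] at h2
  have hup : ∀ p : ℝ, 1 ≤ p → T p ≤ ((n + 1 : ℕ) : ℝ) ^ (1 / p) * σ := by
    intro p hp
    have hp0 : 0 < p := by linarith
    have hc : 0 < ((n + 1 : ℕ) : ℝ) ^ (1 / p) := Real.rpow_pos_of_pos hk0 _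
    rw [← div_le_iff₀' hc]
    refine le_of_forall_gt_imp_ge_of_dense fun c hc' => ?_
    rw [div_le_iff₀' hc]
    obtain ⟨-, ω, h, -, hl⟩ := exists_partition hVpos hΩ hunb hbdd hc' n
    have hc0 : 0 ≤ c := hσ0.trans hc'.le
    have hle : ∀ i, thrVec d V Ω ω i ≤ c := Fin.cases hc'.le hl
    refine ((hglb hp).1 ⟨ω, h, rfl⟩).trans ?_
    have h1 : ∑ i, thrVec d V Ω ω i ^ p ≤ ((n + 1 : ℕ) : ℝ) * c ^ p := by
      refine (Finset.sum_le_card_nsmul _ _ (c ^ p) fun i _ =>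
        Real.rpow_le_rpow (thrVec_nonneg hVpos Ω ω i) (hle i) hp0.le).trans_eq ?_
      simp
    have h2 := Real.rpow_le_rpow (Finset.sum_nonneg fun i _ =>
      Real.rpow_nonneg (thrVec_nonneg hVpos Ω ω i) p) h1 (one_div_pos.2 hp0).le
    rwa [Real.mul_rpow hk0.le (Real.rpow_nonneg hc0 p), ← Real.rpow_mul hc0,
      mul_one_div_cancel hp0.ne', Real.rpow_one] at h2
  have hT0 : ∀ p : ℝ, 1 ≤ p → 0 ≤ T p := fun p hp => hσ0.trans (hlow p hp)
  -- The comparison made symmetric in `p` and `q`.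
  have hsym : ∀ p q : ℝ, 1 ≤ p → 1 ≤ q →
      T p ≤ ((n + 1 : ℕ) : ℝ) ^ |1 / p - 1 / q| * T q := by
    intro p q hp hq
    rcases le_total p q with hpq | hpq
    · refine (hcomp p q hp hpq).trans (mul_le_mul_of_nonneg_right ?_ (hT0 q hq))
      exact Real.rpow_le_rpow_of_exponent_le hk1 (le_abs_self _)
    · exact (hanti q p hq hpq).trans
        (le_mul_of_one_le_left (hT0 q hq) (Real.one_le_rpow hk1 (abs_nonneg _)))
  refine ⟨fun p hp q _ hpq => hanti p q hp hpq, ?_, fun p hp => ⟨hlow p hp, hup p hp⟩, ?_⟩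
  · intro q hq
    have hq1 : (1 : ℝ) ≤ q := hq
    have hq0 : q ≠ 0 := by linarith
    have habs : Tendsto (fun p : ℝ => |1 / p - 1 / q|) (𝓝[Ici 1] q) (𝓝 0) := by
      have : ContinuousAt (fun p : ℝ => |1 / p - 1 / q|) q :=
        ((continuousAt_const.div continuousAt_id hq0).sub continuousAt_const).abs
      simpa [ContinuousAt] using this.tendsto.mono_left nhdsWithin_le_nhds
    have hpow : Tendsto (fun p : ℝ => ((n + 1 : ℕ) : ℝ) ^ |1 / p - 1 / q|) (𝓝[Ici 1] q)
        (𝓝 1) := by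
      simpa using (tendsto_const_nhds (x := ((n + 1 : ℕ) : ℝ))).rpow habs (Or.inl hk0.ne')
    have hu := hpow.mul_const (T q)
    have hl := (hpow.inv₀ one_ne_zero).mul_const (T q)
    rw [one_mul] at hu
    rw [inv_one, one_mul] at hl
    refine tendsto_of_tendsto_of_tendsto_of_le_of_le' hl hu ?_ ?_
    · filter_upwards [self_mem_nhdsWithin] with p hp
      rw [inv_mul_le_iff₀ (Real.rpow_pos_of_pos hk0 _), abs_sub_comm]
      exact hsym q p hq hp
    · filter_upwards [self_mem_nhdsWithin] with p hp
      exact hsym p q hp hq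
  · have hpow : Tendsto (fun p : ℝ => ((n + 1 : ℕ) : ℝ) ^ (1 / p)) atTop (𝓝 1) := by
      have h0 : Tendsto (fun p : ℝ => 1 / p) atTop (𝓝 0) := by
        simpa using tendsto_inv_atTop_zero (𝕜 := ℝ)
      simpa using (tendsto_const_nhds (x := ((n + 1 : ℕ) : ℝ))).rpow h0 (Or.inl hk0.ne')
    have hu := hpow.mul_const σ
    rw [one_mul] at hu
    refine tendsto_of_tendsto_of_tendsto_of_le_of_le' tendsto_const_nhds hu ?_ ?_
    · filter_upwards [eventually_ge_atTop 1] with p hp using hlow p hp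
    · filter_upwards [eventually_ge_atTop 1] with p hp using hup p hp
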